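/- Let (L_1 ⊂ ⋯ ⊂ L_{k−1}) be a partial flag of subspaces of V_k with dim L_i = i and z(L_i) ⊆ L_{i−1} for 1 ≤ i ≤ k−1 (convention L_0 = 0). Then: (a) L_{k−1} is contained in the image of z, i.e. in the span of e_1, …, e_{k−1}, f_1, …, f_{k−1}; (b) dim z^{−1}(L_{k−1}) = k+1, so the quotient z^{−1}(L_{k−1})/L_{k−1} is 2-dimensional; (c) the map L_k ↦ L_k/L_{k−1} is a bijection from the set {L_k : L_{k−1} ⊂ L_k, dim L_k = k, z(L_k) ⊆ L_{k−1}} onto the set of 1-dimensional subspaces of the 2-dimensional space z^{−1}(L_{k−1})/L_{k−1}. Consequently the fibers of the forgetful map Y_k → Y_{k−1}, (L_1, …, L_k) ↦ (L_1, …, L_{k−1}), are in bijection with the projective line over the base field. -/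

import Mathlib

open scoped BigOperators

/-- The coordinate shift: `(shiftMap v) i = v (i+1)`, with the last coordinate sent to `0`. -/
def shiftMap (K : Type*) [Field K] (N : ℕ) : (Fin N → K) →ₗ[K] (Fin N → K) where
  toFun v i := if h : (i : ℕ) + 1 < N then v ⟨(i : ℕ) + 1, h⟩ else 0
  map_add' u v := by funext i; split <;> rename_i h <;> simp [h]
  map_smul' c v := by funext i; split <;> rename_i h <;> simp [h]

/-- The `2k`-dimensional space `V_k`: the first factor holds the coordinates in the basis
`e₁, …, e_k`, the second factor those in `f₁, …, f_k` (0-indexed). -/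
abbrev VV (K : Type*) [Field K] (k : ℕ) := (Fin k → K) × (Fin k → K)

/-- The nilpotent `z : V_k → V_k`, `z eᵢ = eᵢ₋₁`, `z fᵢ = fᵢ₋₁` (with `e₀ = f₀ = 0`). -/
def zmap (K : Type*) [Field K] (k : ℕ) : VV K k →ₗ[K] VV K k :=
  (shiftMap K k).prodMap (shiftMap K k)

/-!
Since `z` is nilpotent and preserves `L := L_{k-1}`, which has dimension `k-1`, we get
`L ≤ ker z^(k-1)`; as both Jordan blocks of `z` have size `k`, this kernel is contained in
`range z`. Hence `dim z⁻¹(L) = dim L + dim ker z`, the extensions of the flag correspond to the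
lines of `z⁻¹(L)/L`, and these form a projective space of dimension `dim ker z - 1 = 1`.
-/

section Subspaces

open Module LinearMap

theorem bijOn_map_mkQ {R M : Type*} [Ring R] [AddCommGroup M] [Module R M]
    {L N : Submodule R M} (hLN : L ≤ N) :
    Set.BijOn (Submodule.map L.mkQ) (Set.Icc L N) (Set.Iic (N.map L.mkQ)) := by
  have comap_map {P : Submodule R M} (hP : L ≤ P) : (P.map L.mkQ).comap L.mkQ = P := by
    rw [Submodule.comap_map_mkQ, sup_eq_right.2 hP]
  refine ⟨fun P hP => Submodule.map_mono hP.2, fun P hP P' hP' h => ?_, fun S hS => ?_⟩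
  · rw [← comap_map hP.1, h, comap_map hP'.1]
  · refine ⟨S.comap L.mkQ, ⟨Submodule.le_comap_mkQ L S, ?_⟩,
      Submodule.map_comap_eq_of_surjective L.mkQ_surjective S⟩
    exact (Submodule.comap_mono hS).trans_eq (comap_map hLN)

variable {K V W : Type*} [DivisionRing K] [AddCommGroup V] [Module K V] [AddCommGroup W]
  [Module K W]

theorem finrank_map_add_finrank_ker (f : V →ₗ[K] W) {N : Submodule K V} [FiniteDimensional K N]
    (hN : ker f ≤ N) : finrank K (N.map f) + finrank K (ker f) = finrank K N := by
  have rank_nullity := finrank_range_add_finrank_ker (f.domRestrict N)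
  rwa [range_domRestrict, ker_domRestrict,
    (Submodule.comapSubtypeEquivOfLe hN).finrank_eq] at rank_nullity

theorem finrank_comap_of_le_range [FiniteDimensional K V] (f : V →ₗ[K] W) {L : Submodule K W}
    (hL : L ≤ range f) : finrank K (L.comap f) = finrank K L + finrank K (ker f) := by
  rw [← finrank_map_add_finrank_ker f (ker_le_comap f), Submodule.map_comap_eq_self hL]

theorem finrank_map_mkQ_add_finrank {L N : Submodule K V} [FiniteDimensional K N] (hLN : L ≤ N) :
    finrank K (N.map L.mkQ) + finrank K L = finrank K N := by
  have finrank_ker := finrank_map_add_finrank_ker L.mkQ (L.ker_mkQ.trans_le hLN)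
  rwa [L.ker_mkQ] at finrank_ker

theorem bijOn_map_mkQ_finrank_one [FiniteDimensional K V] {L N : Submodule K V} (hLN : L ≤ N) :
    Set.BijOn (Submodule.map L.mkQ)
      {P | L < P ∧ finrank K P = finrank K L + 1 ∧ P ≤ N}
      {S | finrank K S = 1 ∧ S ≤ N.map L.mkQ} := by
  convert (bijOn_map_mkQ hLN).subset_right
    (r := {S : Submodule K (V ⧸ L) | finrank K S = 1 ∧ S ≤ N.map L.mkQ}) (fun _ hS => hS.2)
    using 1
  ext P
  constructor
  · rintro ⟨hLP, hP, hPN⟩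
    have finrank_add := finrank_map_mkQ_add_finrank hLP.le
    exact ⟨⟨hLP.le, hPN⟩, by omega, Submodule.map_mono hPN⟩
  · rintro ⟨⟨hLP, hPN⟩, hP, -⟩
    have finrank_add := finrank_map_mkQ_add_finrank hLP
    refine ⟨hLP.lt_of_ne ?_, by omega, hPN⟩
    rintro rfl
    omega

theorem bijOn_map_finrank_eq_of_injective {f : V →ₗ[K] W} (hf : Function.Injective f) (m : ℕ) :
    Set.BijOn (Submodule.map f) {H | finrank K H = m} {S | finrank K S = m ∧ S ≤ range f} := by
  have finrank_map (H : Submodule K V) : finrank K (H.map f) = finrank K H :=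
    (Submodule.equivMapOfInjective f hf H).finrank_eq.symm
  refine ⟨fun H hH => ⟨(finrank_map H).trans hH, map_le_range⟩,
    (Submodule.map_injective_of_injective hf).injOn, fun S hS => ?_⟩
  have map_comap := Submodule.map_comap_eq_self hS.2
  exact ⟨S.comap f, by rw [Set.mem_ofPred_eq, ← finrank_map, map_comap, hS.1], map_comap⟩

theorem nonempty_lines_equiv_projectivization {N : Submodule K V} [FiniteDimensional K N] {d : ℕ}
    (hN : finrank K N = d) :
    Nonempty ({S : Submodule K V | finrank K S = 1 ∧ S ≤ N} ≃
      Projectivization K (Fin d → K)) := by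
  let e : (Fin d → K) ≃ₗ[K] N := LinearEquiv.ofFinrankEq _ _ (by rw [finrank_fin_fun, hN])
  have lines := bijOn_map_finrank_eq_of_injective
    (f := N.subtype ∘ₗ e.toLinearMap) (N.injective_subtype.comp e.injective) 1
  rw [range_comp, e.range, Submodule.map_top, Submodule.range_subtype] at lines
  exact ⟨(lines.equiv _).symm.trans (Projectivization.equivSubmodule K _).symm⟩

end Subspaces

section StableSubspaces

open Module LinearMap

variable {K V : Type*} [DivisionRing K] [AddCommGroup V] [Module K V]

theorem le_ker_pow_finrank_of_isNilpotent {f : End K V} (hf : IsNilpotent f) {L : Submodule K V}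
    [FiniteDimensional K L] (hL : L ≤ L.comap f) : L ≤ ker (f ^ finrank K L) := by
  obtain ⟨m, hm⟩ := hf
  intro v hv
  have mem_ker : (⟨v, hv⟩ : L) ∈ ker (f.restrict hL ^ m) := by
    simp [Module.End.pow_restrict, hm, restrict_apply]
  have restrict_pow_eq_zero := End.ker_pow_le_ker_pow_finrank _ m mem_ker
  rw [Module.End.pow_restrict] at restrict_pow_eq_zero
  exact congrArg Subtype.val restrict_pow_eq_zero

theorem le_comap_of_flag {f : End K V} {n : ℕ} {L : Fin (n + 1) → Submodule K V}
    (hbot : L 0 = ⊥) (hmono : Monotone L) (hf : ∀ i : Fin n, L i.succ ≤ (L i.castSucc).comap f)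
    (i : Fin (n + 1)) : L i ≤ (L i).comap f := by
  cases i using Fin.cases with
  | zero => simp only [hbot, bot_le]
  | succ i => exact (hf i).trans (Submodule.comap_mono (hmono i.castSucc_le_succ))

/-- For nilpotent `f`, the hypothesis `hrange` says that every Jordan block of `f` has size greater
than `n`, and `d` is the number of blocks. -/
theorem fibre_of_forgetful_map_general [FiniteDimensional K V] {f : End K V} (hf : IsNilpotent f)
    {n d : ℕ} (hker : finrank K (ker f) = d) (hrange : ker (f ^ n) ≤ range f)
    {L : Submodule K V} (hn : finrank K L = n) (hL : L ≤ L.comap f) :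
    L ≤ range f ∧
    finrank K (L.comap f) = n + d ∧
    Set.BijOn (fun P : Submodule K V => P.map L.mkQ)
      {P : Submodule K V | L < P ∧ finrank K P = n + 1 ∧ ∀ v ∈ P, f v ∈ L}
      {S : Submodule K (V ⧸ L) | finrank K S = 1 ∧ S ≤ (L.comap f).map L.mkQ} ∧
    Nonempty
      ({P : Submodule K V // L < P ∧ finrank K P = n + 1 ∧ ∀ v ∈ P, f v ∈ L}
        ≃ Projectivization K (Fin d → K)) := by
  subst hn
  have le_range : L ≤ range f := (le_ker_pow_finrank_of_isNilpotent hf hL).trans hrange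
  have finrank_comap : finrank K (L.comap f) = finrank K L + d := by
    rw [finrank_comap_of_le_range f le_range, hker]
  have bijOn_lines := bijOn_map_mkQ_finrank_one hL
  have finrank_quotient : finrank K ((L.comap f).map L.mkQ) = d := by
    have finrank_add := finrank_map_mkQ_add_finrank hL
    omega
  obtain ⟨e⟩ := nonempty_lines_equiv_projectivization finrank_quotient
  exact ⟨le_range, finrank_comap, bijOn_lines, ⟨(bijOn_lines.equiv _).trans e⟩⟩

end StableSubspaces

section Shift

open Module LinearMap

variable {K : Type*} [Field K]

theorem shiftMap_apply {N : ℕ} (v : Fin N → K) (i : Fin N) :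
    shiftMap K N v i = if h : (i : ℕ) + 1 < N then v ⟨i + 1, h⟩ else 0 := rfl

theorem shiftMap_apply_castSucc {n : ℕ} (v : Fin (n + 1) → K) (i : Fin n) :
    shiftMap K (n + 1) v i.castSucc = v i.succ := by
  simp [shiftMap_apply, Fin.succ]

theorem shiftMap_apply_last {n : ℕ} (v : Fin (n + 1) → K) :
    shiftMap K (n + 1) v (Fin.last n) = 0 := by
  simp [shiftMap_apply]

theorem shiftMap_pow_apply {N : ℕ} (m : ℕ) (v : Fin N → K) (i : Fin N) :
    (shiftMap K N ^ m) v i = if h : (i : ℕ) + m < N then v ⟨i + m, h⟩ else 0 := by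
  induction m generalizing i with
  | zero => simp
  | succ m ih =>
    rw [pow_succ', Module.End.mul_apply, shiftMap_apply]
    simp only [ih, add_assoc, add_comm 1 m]
    split_ifs <;> first | rfl | omega

variable (K)

theorem shiftMap_pow_self (N : ℕ) : shiftMap K N ^ N = 0 := by
  ext v i
  simp [shiftMap_pow_apply]

theorem ker_shiftMap_pow_le_range (n : ℕ) :
    ker (shiftMap K (n + 1) ^ n) ≤ range (shiftMap K (n + 1)) := by
  intro v hv
  have last_eq_zero : v (Fin.last n) = 0 := by
    simpa [shiftMap_pow_apply, Fin.last] using congrFun hv 0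
  refine ⟨Fin.cons 0 (Fin.init v), ?_⟩
  ext i
  cases i using Fin.lastCases with
  | last => rw [shiftMap_apply_last, last_eq_zero]
  | cast i => rw [shiftMap_apply_castSucc, Fin.cons_succ, Fin.init]

theorem ker_shiftMap (n : ℕ) :
    ker (shiftMap K (n + 1)) = range (single K (fun _ : Fin (n + 1) => K) 0) := by
  ext v
  constructor
  · intro hv
    refine ⟨v 0, ?_⟩
    ext i
    cases i using Fin.cases with
    | zero => simp
    | succ i => simpa [shiftMap_apply_castSucc] using (congrFun hv i.castSucc).symm
  · rintro ⟨a, rfl⟩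
    ext i
    simp [shiftMap_apply]

theorem zmap_pow (k m : ℕ) :
    zmap K k ^ m = (shiftMap K k ^ m).prodMap (shiftMap K k ^ m) :=
  (map_pow (prodMapRingHom K _ _) (shiftMap K k, shiftMap K k) m).symm

theorem isNilpotent_zmap (k : ℕ) : IsNilpotent (zmap K k) :=
  ⟨k, by rw [zmap_pow, shiftMap_pow_self, prodMap_zero]⟩

theorem ker_zmap_pow_le_range (n : ℕ) :
    ker (zmap K (n + 1) ^ n) ≤ range (zmap K (n + 1)) := by
  rw [zmap_pow, zmap, ker_prodMap, range_prodMap]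
  exact Submodule.prod_mono (ker_shiftMap_pow_le_range K n) (ker_shiftMap_pow_le_range K n)

theorem finrank_ker_zmap (n : ℕ) : finrank K (ker (zmap K (n + 1))) = 2 := by
  rw [zmap, ker_prodMap, ker_shiftMap, ← range_prodMap, finrank_range_of_inj]
  · simp
  · have single_injective := Pi.single_injective (M := fun _ : Fin (n + 1) => K) 0
    exact single_injective.prodMap single_injective

end Shift

/-- **The forgetful map `Y_k → Y_{k-1}` is a `ℙ¹`-bundle (fibrewise statement).**
Given a partial flag `L₀ = 0 ⊂ L₁ ⊂ ⋯ ⊂ L_{k-1}` (here `Lf i = Lᵢ`, `dim Lᵢ = i`,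
`z(Lᵢ) ⊆ L_{i-1}`, and `Ltop = L_{k-1}`): (a) `L_{k-1}` is contained in the image of `z`
(the span of `e₁, …, e_{k-1}, f₁, …, f_{k-1}`); (b) `dim z⁻¹(L_{k-1}) = k+1`, so
`z⁻¹(L_{k-1})/L_{k-1}` is 2-dimensional; (c) `L_k ↦ L_k/L_{k-1}` is a bijection from the
set of admissible one-step extensions of the flag onto the set of lines in the image of
`z⁻¹(L_{k-1})` in `V_k/L_{k-1}`; consequently the fibre of the forgetful map
`Y_k → Y_{k-1}` over the given flag is in bijection with the projective line over `K`. -/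
theorem fibre_of_forgetful_map {K : Type*} [Field K] (k : ℕ) (hk : 1 ≤ k)
    (Lf : Fin k → Submodule K (VV K k))
    (hbot : Lf ⟨0, by omega⟩ = ⊥)
    (hdim : ∀ i : Fin k, Module.finrank K (Lf i) = (i : ℕ))
    (hmono : ∀ i j : Fin k, i ≤ j → Lf i ≤ Lf j)
    (hz : ∀ i : Fin k, 1 ≤ (i : ℕ) → ∀ v ∈ Lf i,
      zmap K k v ∈ Lf ⟨(i : ℕ) - 1, by have := i.isLt; omega⟩)
    (Ltop : Submodule K (VV K k)) (hLtop : Ltop = Lf ⟨k - 1, by omega⟩) :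
    Ltop ≤ LinearMap.range (zmap K k) ∧
    Module.finrank K (Submodule.comap (zmap K k) Ltop) = k + 1 ∧
    Set.BijOn
      (fun Lk : Submodule K (VV K k) => Submodule.map Ltop.mkQ Lk)
      {Lk : Submodule K (VV K k) | Ltop < Lk ∧
        Module.finrank K Lk = k ∧ ∀ v ∈ Lk, zmap K k v ∈ Ltop}
      {S : Submodule K (VV K k ⧸ Ltop) | Module.finrank K S = 1 ∧
        S ≤ Submodule.map Ltop.mkQ (Submodule.comap (zmap K k) Ltop)} ∧
    Nonempty
      ({Lk : Submodule K (VV K k) // Ltop < Lk ∧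
          Module.finrank K Lk = k ∧ ∀ v ∈ Lk, zmap K k v ∈ Ltop}
        ≃ Projectivization K (Fin 2 → K)) := by
  obtain ⟨n, rfl⟩ : ∃ n, k = n + 1 := Nat.exists_eq_add_of_le' hk
  subst hLtop
  have top_le_comap := le_comap_of_flag (f := zmap K (n + 1)) hbot (fun i j => hmono i j)
    (fun i => hz i.succ (Nat.succ_pos i)) (Fin.last n)
  exact fibre_of_forgetful_map_general (isNilpotent_zmap K (n + 1)) (finrank_ker_zmap K n)
    (ker_zmap_pow_le_range K n) (hdim (Fin.last n)) top_le_comap
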